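/- arXiv:2110.15050 — 2 statements merged into one kernel-verified Lean document; each statement's English description precedes it below -/
import Mathlib

section
/- Let d ≥ 2 be an integer, p = 1/d, and let r_{n,k} be the root-cluster weights for random increasing d-ary trees (φ(δ)=d!/(d-δ)! for 0≤δ≤d, φ(δ)=0 for δ>d). Then for every integer k ≥ 1, the k-th moment of the root-cluster size satisfies m_k(n) ~ E_k·(log n)^{2k-1} as n → ∞ (i.e. lim_{n→∞} m_k(n)/(log n)^{2k-1} = E_k), where E_1 = 1/(d-1) and for k ≥ 2, (2k-1)·E_k = (1/(2d))·Σ_{j=1}^{k-1} C(k,j)·E_j·E_{k-j}. -/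
open Finset Filter Asymptotics

/-- The root-cluster weight recursion. -/
noncomputable def clusterRec (p : ℝ) (φ : ℕ → ℝ) (r : ℕ → ℕ → ℝ) (b : ℕ → ℝ) : Prop :=
  (∀ m, b m = ∑ k ∈ Finset.Icc 1 m, r m k) ∧
  ∀ n k : ℕ, 1 ≤ n → 1 ≤ k →
    r n k =
      ∑ δ ∈ Finset.range n, ∑ s ∈ (Finset.range (δ + 1)).attach,
        (δ.choose s.1 : ℝ) * (φ δ / (δ.factorial : ℝ)) *
          ∑ f ∈ (Finset.Nat.antidiagonalTuple δ (n - 1)).filter (fun f => ∀ i, 1 ≤ f i),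
            (((n - 1).factorial : ℝ) / ∏ i, ((f i).factorial : ℝ)) *
              ∑ g ∈ (Finset.Nat.antidiagonalTuple s.1 (k - 1)).filter (fun g => ∀ i, 1 ≤ g i),
                p ^ s.1 * (1 - p) ^ (δ - s.1) *
                  (∏ i : Fin s.1,
                    r (f (Fin.castLE (Nat.lt_succ_iff.mp (Finset.mem_range.mp s.2)) i)) (g i)) *
                  ∏ j ∈ Finset.univ.filter (fun j : Fin δ => s.1 ≤ (j : ℕ)), b (f j)

/-- Partial Bell polynomials. -/
noncomputable def bellPartial (k j : ℕ) (x : ℕ → ℝ) : ℝ :=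
  ∑ m ∈ (Fintype.piFinset (fun _ : Fin (k - j + 1) => Finset.range (k + 1))).filter
      (fun m : Fin (k - j + 1) → ℕ => (∑ i : Fin (k - j + 1), ((i : ℕ) + 1) * m i) = k ∧ (∑ i, m i) = j),
    (k.factorial : ℝ) *
      ∏ i : Fin (k - j + 1), x ((i : ℕ) + 1) ^ m i /
        (((m i).factorial : ℝ) * (((i : ℕ) + 1).factorial : ℝ) ^ m i)

/-! Let `R_k` be the exponential generating function of `∑ⱼ jᵏ r_{n,j} / k!` and
`Y = 1 + ∑ bₙ xⁿ / n!`, so that `Y' = Y ^ d`. Substituting `q = exp t` in the differential equation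
for `∑ r_{n,k} qᵏ xⁿ / n!` and writing `1 + ∑ R_k tᵏ = Y (1 + N)` turns it into
`N' = Y ^ (d - 1) (exp t (1 + N / d) ^ d - 1 - N)`. At `p = 1 / d` the terms linear in `N` cancel,
so the `tᵏ`-coefficient of the last factor involves only lower coefficients of `N`. In the variable
`T = -log (1 - (d - 1) x) / (d - 1)`, for which `T' = Y ^ (d - 1)`, every coefficient of `N` is
therefore a polynomial. Giving `t` weight `2` and `T` weight `-1`, the part of lowest weight obeys
`dN/dT = t + (d - 1) / (2 d) N ^ 2`: the `k`-th polynomial has degree at most `2 k - 1`, and its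
leading coefficient satisfies the recursion of `E`. Finally `(1 - (d - 1) x) Y' = Y` makes the
increments of `[xⁿ] Y T ^ m / [xⁿ] Y` explicit, and the Stolz–Cesàro theorem gives
`(log n / (d - 1)) ^ m` as its asymptotics. -/

section

open PowerSeries
open scoped Polynomial Topology

section Products

variable {S : Type*} [CommSemiring S] {m : ℕ}

theorem coeff_prod_univ_fin (F : Fin m → S⟦X⟧) (n : ℕ) :
    coeff n (∏ i, F i) = ∑ f ∈ Finset.Nat.antidiagonalTuple m n, ∏ i, coeff (f i) (F i) := by
  rw [coeff_prod]
  refine sum_equiv Finsupp.equivFunOnFinite (fun l => ?_) fun l _ => rfl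
  simp [mem_finsuppAntidiag, Finset.Nat.mem_antidiagonalTuple]

theorem polynomialCoeff_prod_univ_fin (F : Fin m → S[X]) (n : ℕ) :
    (∏ i, F i).coeff n = ∑ f ∈ Finset.Nat.antidiagonalTuple m n, ∏ i, (F i).coeff (f i) := by
  have hcoe : ((∏ i, F i : S[X]) : S⟦X⟧) = ∏ i, (F i : S⟦X⟧) :=
    map_prod (Polynomial.coeToPowerSeries.ringHom (R := S)) F univ
  simp only [← Polynomial.coeff_coe, hcoe, coeff_prod_univ_fin]

theorem prod_fin_ite_lt {M : Type*} [CommMonoid M] {s : ℕ} (hs : s ≤ m) (u v : Fin m → M) :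
    ∏ i : Fin m, (if (i : ℕ) < s then u i else v i) =
      (∏ i : Fin s, u (Fin.castLE hs i)) *
        ∏ j ∈ univ.filter (fun j : Fin m => s ≤ (j : ℕ)), v j := by
  obtain ⟨t, rfl⟩ := Nat.exists_eq_add_of_le hs
  have hlt (i : Fin s) : ¬ s ≤ (i : ℕ) := not_le.mpr i.is_lt
  simp only [prod_filter, Fin.prod_univ_add, Fin.val_castAdd, Fin.is_lt, if_true, Fin.val_natAdd,
    Nat.le_add_right, not_lt.mpr, if_false, hlt, prod_const_one, one_mul]
  rfl

end Products

section ExponentialGeneratingFunction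

variable {A : Type*} [CommSemiring A] [Algebra ℚ A]

/-- The exponential generating function `∑ aₙ Xⁿ / n!` of a sequence in a `ℚ`-algebra. -/
noncomputable def egf (a : ℕ → A) : A⟦X⟧ :=
  PowerSeries.mk fun n => (n.factorial : ℚ)⁻¹ • a n

theorem coeff_egf (a : ℕ → A) (n : ℕ) : coeff n (egf a) = (n.factorial : ℚ)⁻¹ • a n :=
  coeff_mk _ _

theorem constantCoeff_egf (a : ℕ → A) : constantCoeff (egf a) = a 0 := by
  simp [← coeff_zero_eq_constantCoeff_apply, coeff_egf]

theorem derivative_egf (a : ℕ → A) : d⁄dX A (egf a) = egf fun n => a (n + 1) := by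
  ext n
  have hn : (n + 1 : ℚ) ≠ 0 := by positivity
  have hcast : (n + 1 : A) = algebraMap ℚ A (n + 1) := by simp
  rw [coeff_derivative, coeff_egf, coeff_egf, hcast, mul_comm, ← Algebra.smul_def, smul_smul,
    Nat.factorial_succ]
  congr 1
  push_cast
  field_simp

theorem coeff_prod_egf {m : ℕ} (a : Fin m → ℕ → A) (ha : ∀ i, a i 0 = 0) (n : ℕ) :
    coeff n (∏ i, egf (a i)) =
      ∑ f ∈ (Finset.Nat.antidiagonalTuple m n).filter (fun f => ∀ i, 1 ≤ f i),
        (∏ i, ((f i).factorial : ℚ))⁻¹ • ∏ i, a i (f i) := by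
  rw [coeff_prod_univ_fin, sum_filter]
  refine sum_congr rfl fun f _ => ?_
  split_ifs with hf
  · simp only [coeff_egf, Algebra.smul_def, prod_mul_distrib, ← map_prod, prod_inv_distrib]
  · push Not at hf
    obtain ⟨i, hi⟩ := hf
    refine prod_eq_zero (mem_univ i) ?_
    rw [Nat.lt_one_iff.mp hi, coeff_egf, ha, smul_zero]

end ExponentialGeneratingFunction

section RootCluster

/-- The generating polynomial `∑ₖ r_{n,k} qᵏ` of the root-cluster weights of trees of size `n`. -/
noncomputable def clusterPoly (r : ℕ → ℕ → ℝ) (n : ℕ) : ℝ[X] :=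
  ∑ k ∈ Icc 1 n, Polynomial.monomial k (r n k)

variable {p : ℝ} {φ : ℕ → ℝ} {r : ℕ → ℕ → ℝ} {b : ℕ → ℝ}

theorem clusterPoly_zero (r : ℕ → ℕ → ℝ) : clusterPoly r 0 = 0 := by simp [clusterPoly]

theorem clusterRec.total_zero (h : clusterRec p φ r b) : b 0 = 0 := by simp [h.1]

theorem clusterRec.eq_zero_of_lt (h : clusterRec p φ r b) {n k : ℕ} (hn : 1 ≤ n) (hnk : n < k) :
    r n k = 0 := by
  induction n using Nat.strong_induction_on generalizing k with
  | _ n ih =>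
    rw [h.2 n k hn (by lia)]
    refine sum_eq_zero fun δ _ => sum_eq_zero fun s _ => mul_eq_zero_of_right _ <|
      sum_eq_zero fun f hf => mul_eq_zero_of_right _ <| sum_eq_zero fun g hg =>
        mul_eq_zero_of_left (mul_eq_zero_of_right _ ?_) _
    simp only [mem_filter, Finset.Nat.mem_antidiagonalTuple] at hf hg
    have hs : s.1 ≤ δ := Nat.lt_succ_iff.mp (mem_range.mp s.2)
    have hsum : ∑ i : Fin s.1, f (Fin.castLE hs i) ≤ n - 1 :=
      calc ∑ i : Fin s.1, f (Fin.castLE hs i)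
          = ∑ j ∈ univ.map (Fin.castLEEmb hs), f j := by rw [sum_map]; rfl
        _ ≤ ∑ j, f j := sum_le_sum_of_subset (subset_univ _)
        _ = n - 1 := hf.1
    obtain ⟨i, -, hi⟩ : ∃ i ∈ univ, f (Fin.castLE hs i) < g i :=
      exists_lt_of_sum_lt (by lia)
    have hfi : f (Fin.castLE hs i) ≤ ∑ i : Fin s.1, f (Fin.castLE hs i) :=
      single_le_sum (f := fun i => f (Fin.castLE hs i)) (fun _ _ => Nat.zero_le _) (mem_univ i)
    exact prod_eq_zero (mem_univ i) (ih _ (by lia) (hf.2 _) hi)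

theorem clusterRec.coeff_clusterPoly (h : clusterRec p φ r b) {n : ℕ} (hn : 1 ≤ n) (k : ℕ) :
    (clusterPoly r n).coeff k = if 1 ≤ k then r n k else 0 := by
  simp only [clusterPoly, Polynomial.finsetSum_coeff, Polynomial.coeff_monomial, sum_ite_eq',
    mem_Icc]
  rcases le_or_gt k n with hk | hk
  · simp [hk]
  · simp [hk.not_ge, h.eq_zero_of_lt hn hk]

theorem clusterRec.coeff_prod_clusterPoly (h : clusterRec p φ r b) {s : ℕ} {f : Fin s → ℕ}
    (hf : ∀ i, 1 ≤ f i) (k : ℕ) :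
    (∏ i, clusterPoly r (f i)).coeff k =
      ∑ g ∈ (Finset.Nat.antidiagonalTuple s k).filter (fun g => ∀ i, 1 ≤ g i),
        ∏ i, r (f i) (g i) := by
  rw [polynomialCoeff_prod_univ_fin, sum_filter]
  refine sum_congr rfl fun g _ => ?_
  simp only [h.coeff_clusterPoly (hf _)]
  exact prod_ite_zero (p := fun i => 1 ≤ g i) |>.trans (by simp)

theorem clusterRec.coeff_egf_pow_mul_pow (h : clusterRec p φ r b) {s δ : ℕ} (hs : s ≤ δ) (n k : ℕ) :
    (coeff n (egf (clusterPoly r) ^ s * egf (fun m => Polynomial.C (b m)) ^ (δ - s))).coeff k =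
      ∑ f ∈ (Finset.Nat.antidiagonalTuple δ n).filter (fun f => ∀ i, 1 ≤ f i),
        (∏ i, ((f i).factorial : ℝ))⁻¹ *
          ∑ g ∈ (Finset.Nat.antidiagonalTuple s k).filter (fun g => ∀ i, 1 ≤ g i),
            (∏ i : Fin s, r (f (Fin.castLE hs i)) (g i)) *
              ∏ j ∈ univ.filter (fun j : Fin δ => s ≤ (j : ℕ)), b (f j) := by
  set a : Fin δ → ℕ → ℝ[X] :=
    fun i => if (i : ℕ) < s then clusterPoly r else fun m => Polynomial.C (b m) with ha
  have hprod : egf (clusterPoly r) ^ s * egf (fun m => Polynomial.C (b m)) ^ (δ - s) =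
      ∏ i, egf (a i) := by
    obtain ⟨t, rfl⟩ := Nat.exists_eq_add_of_le hs
    simp [ha, Fin.prod_univ_add]
  have ha0 (i : Fin δ) : a i 0 = 0 := by
    simp only [ha]
    split_ifs <;> simp [clusterPoly_zero, h.total_zero]
  rw [hprod, coeff_prod_egf a ha0, Polynomial.finsetSum_coeff]
  refine sum_congr rfl fun f hf => ?_
  have hf1 : ∀ i, 1 ≤ f i := (mem_filter.mp hf).2
  have hsplit : ∏ i, a i (f i) = (∏ i : Fin s, clusterPoly r (f (Fin.castLE hs i))) *
      Polynomial.C (∏ j ∈ univ.filter (fun j : Fin δ => s ≤ (j : ℕ)), b (f j)) := by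
    rw [map_prod, ← prod_fin_ite_lt hs (fun i => clusterPoly r (f i))
      fun j => Polynomial.C (b (f j))]
    exact prod_congr rfl fun i _ => by simp only [ha]; split_ifs <;> rfl
  rw [Polynomial.coeff_smul, hsplit, Polynomial.coeff_mul_C,
    h.coeff_prod_clusterPoly fun i => hf1 _, sum_mul, Rat.smul_def]
  push_cast
  rfl

theorem clusterRec.coeff_smul_add_smul_pow (h : clusterRec p φ r b) (δ n k : ℕ) :
    (coeff n ((p • egf (clusterPoly r) + (1 - p) • egf fun m => Polynomial.C (b m)) ^ δ)).coeff k =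
      ∑ s ∈ (range (δ + 1)).attach, (δ.choose s.1 : ℝ) * (p ^ s.1 * (1 - p) ^ (δ - s.1)) *
        ∑ f ∈ (Finset.Nat.antidiagonalTuple δ n).filter (fun f => ∀ i, 1 ≤ f i),
          (∏ i, ((f i).factorial : ℝ))⁻¹ *
            ∑ g ∈ (Finset.Nat.antidiagonalTuple s.1 k).filter (fun g => ∀ i, 1 ≤ g i),
              (∏ i : Fin s.1,
                r (f (Fin.castLE (Nat.lt_succ_iff.mp (mem_range.mp s.2)) i)) (g i)) *
                ∏ j ∈ univ.filter (fun j : Fin δ => s.1 ≤ (j : ℕ)), b (f j) := by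
  rw [add_pow, map_sum, Polynomial.finsetSum_coeff, ← sum_attach]
  refine sum_congr rfl fun s _ => ?_
  rw [← h.coeff_egf_pow_mul_pow, smul_pow, smul_pow, smul_mul_smul_comm, mul_comm,
    ← nsmul_eq_mul, map_nsmul, PowerSeries.coeff_smul, Polynomial.coeff_smul,
    Polynomial.coeff_smul, nsmul_eq_mul, smul_eq_mul, ← mul_assoc]

/-- The differential equation `R' = q Φ(p R + (1 - p) B)` for `R = ∑ r_{n,k} qᵏ xⁿ / n!` and
`Φ(z) = ∑ φ(δ) z^δ / δ!`, read off at the coefficient of `xⁿ`. -/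
theorem clusterRec.coeff_derivative_egf (h : clusterRec p φ r b) (n : ℕ) :
    coeff n (d⁄dX ℝ[X] (egf (clusterPoly r))) = Polynomial.X *
      ∑ δ ∈ range (n + 1), (φ δ / δ.factorial) •
        coeff n ((p • egf (clusterPoly r) + (1 - p) • egf fun m => Polynomial.C (b m)) ^ δ) := by
  rw [derivative_egf, coeff_egf]
  ext k
  rw [Polynomial.coeff_smul, h.coeff_clusterPoly (n := n + 1) (by lia)]
  rcases k with _ | k
  · simp
  rw [if_pos (by lia), h.2 (n + 1) (k + 1) (by lia) (by lia), Polynomial.coeff_X_mul,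
    Polynomial.finsetSum_coeff, Rat.smul_def, mul_sum]
  refine sum_congr rfl fun δ _ => ?_
  rw [Polynomial.coeff_smul, h.coeff_smul_add_smul_pow, smul_eq_mul, mul_sum, mul_sum]
  refine sum_congr rfl fun s _ => ?_
  simp only [Nat.add_sub_cancel, mul_sum]
  refine sum_congr rfl fun f _ => sum_congr rfl fun g _ => ?_
  have hn : (n.factorial : ℝ) ≠ 0 := by positivity
  push_cast
  field_simp

end RootCluster

section DAry

theorem coeff_one_add_pow {S : Type*} [CommSemiring S] {Z : S⟦X⟧} (hZ : constantCoeff Z = 0)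
    (d n : ℕ) :
    coeff n ((1 + Z) ^ d) = ∑ δ ∈ range (n + 1), d.choose δ • coeff n (Z ^ δ) := by
  have hlow {δ : ℕ} (hδ : n < δ) : coeff n (Z ^ δ) = 0 :=
    X_pow_dvd_iff.mp (pow_dvd_pow_of_dvd (X_dvd_iff.mpr hZ) δ) n hδ
  calc coeff n ((1 + Z) ^ d)
      = ∑ δ ∈ range (d + 1), d.choose δ • coeff n (Z ^ δ) := by
        rw [add_comm, add_pow, map_sum]
        exact sum_congr rfl fun δ _ => by
          rw [one_pow, mul_one, mul_comm, ← nsmul_eq_mul, map_nsmul]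
    _ = ∑ δ ∈ range (max d n + 1), d.choose δ • coeff n (Z ^ δ) :=
        sum_subset (range_mono (by lia)) fun δ _ hδ => by
          rw [Nat.choose_eq_zero_of_lt (by simpa using hδ), zero_smul]
    _ = ∑ δ ∈ range (n + 1), d.choose δ • coeff n (Z ^ δ) :=
        (sum_subset (range_mono (by lia)) fun δ _ hδ => by
          rw [hlow (by simpa using hδ), smul_zero]).symm

/-- The degree weights of random increasing `d`-ary trees, whose exponential generating function
is `(1 + z) ^ d`. -/
noncomputable def daryWeight (d δ : ℕ) : ℝ :=
  if δ ≤ d then (d.factorial : ℝ) / ((d - δ).factorial : ℝ) else 0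

theorem daryWeight_div_factorial (d δ : ℕ) : daryWeight d δ / δ.factorial = d.choose δ := by
  unfold daryWeight
  split_ifs with hδ
  · rw [Nat.cast_choose ℝ hδ, div_div, mul_comm]
  · rw [Nat.choose_eq_zero_of_lt (not_le.mp hδ), zero_div, Nat.cast_zero]

theorem clusterRec.derivative_egf_dary {d : ℕ} {p : ℝ} {r : ℕ → ℕ → ℝ} {b : ℕ → ℝ}
    (h : clusterRec p (daryWeight d) r b) :
    d⁄dX ℝ[X] (egf (clusterPoly r)) = C Polynomial.X *
      (1 + (p • egf (clusterPoly r) + (1 - p) • egf fun m => Polynomial.C (b m))) ^ d := by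
  ext1 n
  have hZ : constantCoeff
      (p • egf (clusterPoly r) + (1 - p) • egf fun m => Polynomial.C (b m)) = 0 := by
    rw [map_add, constantCoeff_smul, constantCoeff_smul, constantCoeff_egf, constantCoeff_egf,
      clusterPoly_zero, h.total_zero, map_zero, smul_zero, smul_zero, add_zero]
  rw [h.coeff_derivative_egf, coeff_C_mul, coeff_one_add_pow hZ]
  simp only [daryWeight_div_factorial, Nat.cast_smul_eq_nsmul]

end DAry

section MomentTransform

/-- Exchange of the two variables of a power series in two variables. -/
noncomputable def swapVars (S : Type*) [CommSemiring S] : S⟦X⟧⟦X⟧ →+* S⟦X⟧⟦X⟧ where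
  toFun F := PowerSeries.mk fun k => PowerSeries.mk fun n => coeff k (coeff n F)
  map_one' := by
    ext k n
    simp only [coeff_mk, coeff_one]
    split_ifs <;> simp_all
  map_zero' := by ext; simp
  map_add' F G := by ext; simp
  map_mul' F G := by
    ext k n
    simp only [coeff_mk, coeff_mul, map_sum]
    rw [sum_comm]

theorem coeff_coeff_swapVars {S : Type*} [CommSemiring S] (F : S⟦X⟧⟦X⟧) (k n : ℕ) :
    coeff n (coeff k (swapVars S F)) = coeff k (coeff n F) := by
  simp [swapVars]

variable {K : Type*} [CommRing K] [Algebra ℚ K]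

/-- The substitution `q = exp t` in a series in `x` with coefficients polynomial in `q`. The result
is a series in `t` with coefficients in `K⟦x⟧`, so that for a generating function of weights
its coefficients are the generating functions of the moments. -/
noncomputable def momentTransform (K : Type*) [CommRing K] [Algebra ℚ K] : K[X]⟦X⟧ →+* K⟦X⟧⟦X⟧ :=
  (swapVars K).comp (PowerSeries.map (Polynomial.aeval (exp K) : K[X] →ₐ[K] K⟦X⟧).toRingHom)

theorem coeff_coeff_momentTransform (F : K[X]⟦X⟧) (k n : ℕ) :
    coeff n (coeff k (momentTransform K F)) = coeff k (Polynomial.aeval (exp K) (coeff n F)) := by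
  simp [momentTransform, coeff_coeff_swapVars]

theorem coeff_momentTransform_derivative (F : K[X]⟦X⟧) (k : ℕ) :
    coeff k (momentTransform K (d⁄dX K[X] F)) = d⁄dX K (coeff k (momentTransform K F)) := by
  ext n
  have hcast : (n + 1 : K[X]) = Polynomial.C (n + 1 : K) := by simp
  rw [coeff_coeff_momentTransform, coeff_derivative, coeff_derivative,
    coeff_coeff_momentTransform, hcast, map_mul, Polynomial.aeval_C, PowerSeries.algebraMap_apply,
    Algebra.algebraMap_self_apply, coeff_mul_C]

theorem momentTransform_map_C (F : K⟦X⟧) :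
    momentTransform K (PowerSeries.map Polynomial.C F) = C F := by
  ext k n
  rw [coeff_coeff_momentTransform, PowerSeries.coeff_map, Polynomial.aeval_C,
    PowerSeries.algebraMap_apply, Algebra.algebraMap_self_apply, coeff_C, coeff_C]
  split_ifs <;> simp

theorem momentTransform_smul (a : K) (F : K[X]⟦X⟧) :
    momentTransform K (a • F) = a • momentTransform K F := by
  ext k n
  simp [coeff_coeff_momentTransform]

theorem momentTransform_C_X : momentTransform K (C Polynomial.X) = exp K⟦X⟧ := by
  ext k n
  rw [coeff_coeff_momentTransform, coeff_C, coeff_exp, ← RingHom.map_rat_algebraMap (C (R := K)),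
    coeff_C]
  split_ifs <;> simp

theorem coeff_coeff_momentTransform_egf (r : ℕ → ℕ → ℝ) (n k : ℕ) :
    coeff n (coeff k (momentTransform ℝ (egf (clusterPoly r)))) =
      (∑ j ∈ Icc 1 n, (j : ℝ) ^ k * r n j) / (n.factorial * k.factorial) := by
  have hterm (j : ℕ) : coeff k (Polynomial.aeval (exp ℝ) (Polynomial.monomial j (r n j))) =
      (j : ℝ) ^ k * r n j / k.factorial := by
    rw [Polynomial.aeval_monomial, PowerSeries.algebraMap_apply, Algebra.algebraMap_self_apply,
      coeff_C_mul, exp_pow_eq_rescale_exp, coeff_rescale, coeff_exp]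
    simp only [one_div, map_inv₀, map_natCast]
    ring
  rw [coeff_coeff_momentTransform, coeff_egf, map_rat_smul, PowerSeries.coeff_smul, clusterPoly,
    map_sum, map_sum, sum_congr rfl fun j _ => hterm j, ← sum_div, Rat.smul_def]
  push_cast
  field_simp

theorem clusterRec.coeff_zero_momentTransform {p : ℝ} {φ : ℕ → ℝ} {r : ℕ → ℕ → ℝ} {b : ℕ → ℝ}
    (h : clusterRec p φ r b) :
    coeff 0 (momentTransform ℝ (egf (clusterPoly r))) = egf b := by
  ext n
  rw [coeff_coeff_momentTransform_egf, coeff_egf, h.1, Rat.smul_def]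
  simp [div_eq_inv_mul]

theorem clusterRec.derivative_coeff_momentTransform {d : ℕ} {p : ℝ} {r : ℕ → ℕ → ℝ} {b : ℕ → ℝ}
    (h : clusterRec p (daryWeight d) r b) (k : ℕ) :
    d⁄dX ℝ (coeff k (momentTransform ℝ (egf (clusterPoly r)))) = coeff k (exp ℝ⟦X⟧ *
      (1 + (p • momentTransform ℝ (egf (clusterPoly r)) + (1 - p) • C (egf b))) ^ d) := by
  have hB : (egf fun m => Polynomial.C (b m)) = PowerSeries.map Polynomial.C (egf b) := by
    ext1 n
    rw [PowerSeries.coeff_map, coeff_egf, coeff_egf, map_rat_smul]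
  rw [← coeff_momentTransform_derivative, h.derivative_egf_dary, hB, map_mul, map_pow, map_add,
    map_add, map_one, momentTransform_smul, momentTransform_smul, momentTransform_C_X,
    momentTransform_map_C]

end MomentTransform

section CriticalFlow

variable {A B : Type*} [CommRing A] [Algebra ℚ A] [CommRing B] [Algebra ℚ B]

/-- The right-hand side `exp t * (1 + M / d) ^ d - 1 - M` of the evolution equation of the
normalised moment generating function `M` at the critical parameter `p = 1 / d`. -/
noncomputable def criticalFlow (d : ℕ) (M : A⟦X⟧) : A⟦X⟧ :=
  exp A * (1 + (d : ℚ)⁻¹ • M) ^ d - 1 - M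

theorem map_criticalFlow (f : A →+* B) (d : ℕ) (M : A⟦X⟧) :
    PowerSeries.map f (criticalFlow d M) = criticalFlow d (PowerSeries.map f M) := by
  simp only [criticalFlow, map_sub, map_mul, map_pow, map_add, map_one, map_exp, map_rat_smul]

theorem constantCoeff_criticalFlow {d : ℕ} {M : A⟦X⟧} (hM : constantCoeff M = 0) :
    constantCoeff (criticalFlow d M) = 0 := by
  simp [criticalFlow, hM]

/-- At criticality the linear terms in `M` cancel, which is why the `k`-th coefficient of `M` itself
is not needed. -/
theorem coeff_criticalFlow_congr {d : ℕ} (hd : d ≠ 0) {M N : A⟦X⟧} (hM : constantCoeff M = 0)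
    (hN : constantCoeff N = 0) {k : ℕ} (hMN : ∀ j < k, coeff j M = coeff j N) :
    coeff k (criticalFlow d M) = coeff k (criticalFlow d N) := by
  set u := 1 + (d : ℚ)⁻¹ • M with hu
  set v := 1 + (d : ℚ)⁻¹ • N with hv
  set G := ∑ i ∈ range d, u ^ i * v ^ (d - 1 - i) with hG
  have hfactor : criticalFlow d M - criticalFlow d N =
      (M - N) * (exp A * (d : ℚ)⁻¹ • G - 1) := by
    have hgeom : u ^ d - v ^ d = (M - N) * (d : ℚ)⁻¹ • G := by
      rw [← (Commute.all u v).mul_geom_sum₂ d, hu, hv, add_sub_add_left_eq_sub, ← smul_sub,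
        smul_mul_assoc, mul_smul_comm]
    simp only [criticalFlow]
    linear_combination exp A * hgeom
  have hMN' : X ^ k ∣ M - N := X_pow_dvd_iff.mpr fun j hj => by rw [map_sub, hMN j hj, sub_self]
  have hG0 : constantCoeff (exp A * (d : ℚ)⁻¹ • G - 1) = 0 := by
    have hGd : constantCoeff G = (d : ℚ) • 1 := by
      simp [hG, hu, hv, hM, hN, Nat.cast_smul_eq_nsmul]
    have hd' : (d : ℚ) ≠ 0 := by exact_mod_cast hd
    simp [hGd, smul_smul, hd']
  have hdvd : X ^ (k + 1) ∣ criticalFlow d M - criticalFlow d N := by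
    rw [hfactor, pow_succ]
    exact mul_dvd_mul hMN' (X_dvd_iff.mpr hG0)
  rw [← sub_eq_zero, ← map_sub]
  exact X_pow_dvd_iff.mp hdvd k k.lt_succ_self

end CriticalFlow

section Weight

variable {K : Type*} [CommRing K]

/-- The series in `t` over `K[T]` all of whose monomials `Tⁱ tʲ` have weight `2 * j - i` at least
`s`. -/
def weightGE (K : Type*) [CommRing K] (s : ℕ) : Submodule K K[X]⟦X⟧ where
  carrier := {F | ∀ j i, 2 * j < i + s → (coeff j F).coeff i = 0}
  zero_mem' := fun _ _ _ => by simp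
  add_mem' := fun hF hG j i h => by simp [hF j i h, hG j i h]
  smul_mem' := fun a F hF j i h => by simp [hF j i h]

theorem weightGE_antitone : Antitone (weightGE K) := fun _ _ hst _ hF j i h => hF j i (by lia)

theorem mul_mem_weightGE {s t : ℕ} {F G : K[X]⟦X⟧} (hF : F ∈ weightGE K s)
    (hG : G ∈ weightGE K t) : F * G ∈ weightGE K (s + t) := by
  intro j i h
  rw [coeff_mul, Polynomial.finsetSum_coeff]
  refine sum_eq_zero fun x hx => ?_
  rw [Polynomial.coeff_mul]
  refine sum_eq_zero fun y hy => ?_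
  rw [HasAntidiagonal.mem_antidiagonal] at hx hy
  by_cases hxy : 2 * x.1 < y.1 + s
  · rw [hF _ _ hxy, zero_mul]
  · rw [hG _ _ (by lia), mul_zero]

theorem one_mem_weightGE : (1 : K[X]⟦X⟧) ∈ weightGE K 0 := by
  intro j i h
  rw [coeff_one]
  split_ifs with hj
  · rw [Polynomial.coeff_one, if_neg (by lia)]
  · rfl

theorem X_mem_weightGE : (X : K[X]⟦X⟧) ∈ weightGE K 2 := by
  intro j i h
  rw [coeff_X]
  split_ifs with hj
  · rw [Polynomial.coeff_one, if_neg (by lia)]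
  · rfl

theorem one_add_pow_sub_mem_weightGE {y : K[X]⟦X⟧} (hy : y ∈ weightGE K 1) (d : ℕ) :
    (1 + y) ^ d - 1 - d * y - d.choose 2 * y ^ 2 ∈ weightGE K 3 := by
  induction d with
  | zero => simp
  | succ d ih =>
    have hcube : y ^ 2 * y ∈ weightGE K 3 :=
      pow_two y ▸ mul_mem_weightGE (mul_mem_weightGE hy hy) hy
    have hone : 1 + y ∈ weightGE K 0 := add_mem one_mem_weightGE (weightGE_antitone zero_le_one hy)
    have hsplit : (1 + y) ^ (d + 1) - 1 - (d + 1 : ℕ) * y - (d + 1).choose 2 * y ^ 2 =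
        ((1 + y) ^ d - 1 - d * y - d.choose 2 * y ^ 2) * (1 + y) + d.choose 2 • (y ^ 2 * y) := by
      rw [Nat.choose_succ_succ' d 1, Nat.choose_one_right, nsmul_eq_mul]
      push_cast
      ring
    rw [hsplit]
    exact add_mem (mul_mem_weightGE ih hone) (nsmul_mem hcube _)

variable [Algebra ℚ K]

theorem exp_sub_one_sub_X_mem_weightGE : exp K[X] - 1 - X ∈ weightGE K 3 := by
  intro j i h
  rcases j with _ | _ | j
  · simp
  · simp [coeff_one, coeff_X]
  · rw [map_sub, map_sub, coeff_exp, coeff_one, coeff_X, if_neg (by lia), if_neg (by lia),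
      sub_zero, sub_zero, Polynomial.algebraMap_apply, Polynomial.coeff_C, if_neg (by lia)]

theorem criticalFlow_sub_mem_weightGE {d : ℕ} (hd : d ≠ 0) {N : K[X]⟦X⟧} (hN : N ∈ weightGE K 1) :
    criticalFlow d N - X - (((d : ℚ) - 1) / (2 * d)) • N ^ 2 ∈ weightGE K 3 := by
  have hd' : (d : ℚ) ≠ 0 := by exact_mod_cast hd
  set c : ℚ := ((d : ℚ) - 1) / (2 * d) with hc
  set y := (d : ℚ)⁻¹ • N with hy
  set e := exp K[X] - 1 - X with he
  set G := (1 + y) ^ d - 1 - d * y - d.choose 2 * y ^ 2 with hG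
  have he3 : e ∈ weightGE K 3 := exp_sub_one_sub_X_mem_weightGE
  have hG3 : G ∈ weightGE K 3 :=
    one_add_pow_sub_mem_weightGE (Submodule.smul_of_tower_mem _ _ hN) d
  have hN2 : c • N ^ 2 ∈ weightGE K 2 :=
    Submodule.smul_of_tower_mem _ _ (pow_two N ▸ mul_mem_weightGE hN hN)
  have hlin : (d : K[X]⟦X⟧) * y = N := by
    rw [← nsmul_eq_mul, ← Nat.cast_smul_eq_nsmul ℚ, hy, smul_smul, mul_inv_cancel₀ hd', one_smul]
  have hquad : (d.choose 2 : K[X]⟦X⟧) * y ^ 2 = c • N ^ 2 := by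
    rw [← nsmul_eq_mul, ← Nat.cast_smul_eq_nsmul ℚ, hy, smul_pow, smul_smul, Nat.cast_choose_two,
      hc]
    congr 1
    field_simp
  have hsplit : criticalFlow d N - X - c • N ^ 2 =
      X * N + X * c • N ^ 2 + (1 + X + e) * G + e * (1 + N + c • N ^ 2) := by
    rw [criticalFlow]
    linear_combination (-exp K[X]) * hG - (1 + N + c • N ^ 2 + G) * he +
      exp K[X] * (hlin + hquad)
  have h0 {s : ℕ} {F : K[X]⟦X⟧} (hF : F ∈ weightGE K s) : F ∈ weightGE K 0 :=
    weightGE_antitone s.zero_le hF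
  rw [hsplit]
  refine add_mem (add_mem (add_mem ?_ ?_) ?_) ?_
  · exact mul_mem_weightGE X_mem_weightGE hN
  · exact weightGE_antitone (by lia) (mul_mem_weightGE X_mem_weightGE hN2)
  · simpa using
      mul_mem_weightGE (add_mem (add_mem one_mem_weightGE (h0 X_mem_weightGE)) (h0 he3)) hG3
  · exact mul_mem_weightGE he3 (add_mem (add_mem one_mem_weightGE (h0 hN)) (h0 hN2))

end Weight

section MomentPolynomials

variable {K : Type*} [CommRing K] [Algebra ℚ K]

/-- The primitive without constant term of a polynomial over a `ℚ`-algebra. -/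
noncomputable def polyPrimitive (Q : K[X]) : K[X] :=
  ∑ i ∈ range (Q.natDegree + 1), Polynomial.monomial (i + 1) ((i + 1 : ℚ)⁻¹ • Q.coeff i)

theorem coeff_zero_polyPrimitive (Q : K[X]) : (polyPrimitive Q).coeff 0 = 0 := by
  simp [polyPrimitive, Polynomial.finsetSum_coeff, Polynomial.coeff_monomial]

theorem coeff_succ_polyPrimitive (Q : K[X]) (i : ℕ) :
    (polyPrimitive Q).coeff (i + 1) = (i + 1 : ℚ)⁻¹ • Q.coeff i := by
  simp only [polyPrimitive, Polynomial.finsetSum_coeff, Polynomial.coeff_monomial,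
    Nat.add_right_cancel_iff, sum_ite_eq', mem_range, Nat.lt_succ_iff]
  split_ifs with hi
  · rfl
  · rw [Polynomial.coeff_eq_zero_of_natDegree_lt (not_le.mp hi), smul_zero]

theorem derivative_polyPrimitive (Q : K[X]) : Polynomial.derivative (polyPrimitive Q) = Q := by
  ext i
  have hi : (i + 1 : ℚ) ≠ 0 := by positivity
  have hcast : (i + 1 : K) = algebraMap ℚ K (i + 1) := by simp
  rw [Polynomial.coeff_derivative, coeff_succ_polyPrimitive, hcast, mul_comm, ← Algebra.smul_def,
    smul_smul, mul_inv_cancel₀ hi, one_smul]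

/-- The polynomials expressing the normalised moment generating functions in terms of
`T = -log (1 - (d - 1) * x) / (d - 1)`. The `k`-th one is the primitive of the `k`-th coefficient of
the critical flow, which involves the previous ones only. -/
noncomputable def momentPoly (K : Type*) [CommRing K] [Algebra ℚ K] (d k : ℕ) : K[X] :=
  polyPrimitive (coeff k (criticalFlow d
    (PowerSeries.mk fun j => if _h : j < k then momentPoly K d j else 0)))

/-- The generating series in `t` of the polynomials `momentPoly K d k`. -/
noncomputable def momentSeries (K : Type*) [CommRing K] [Algebra ℚ K] (d : ℕ) : K[X]⟦X⟧ :=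
  PowerSeries.mk (momentPoly K d)

theorem coeff_zero_momentPoly (d k : ℕ) : (momentPoly K d k).coeff 0 = 0 := by
  rw [momentPoly, coeff_zero_polyPrimitive]

theorem momentPoly_zero (d : ℕ) : momentPoly K d 0 = 0 := by
  rw [momentPoly, coeff_zero_eq_constantCoeff_apply, constantCoeff_criticalFlow]
  · simp [polyPrimitive]
  · simp [← coeff_zero_eq_constantCoeff_apply]

theorem constantCoeff_momentSeries (d : ℕ) : constantCoeff (momentSeries K d) = 0 := by
  rw [← coeff_zero_eq_constantCoeff_apply, momentSeries, coeff_mk, momentPoly_zero]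

theorem derivative_momentPoly {d : ℕ} (hd : d ≠ 0) (k : ℕ) :
    Polynomial.derivative (momentPoly K d k) = coeff k (criticalFlow d (momentSeries K d)) := by
  rw [momentPoly, derivative_polyPrimitive]
  refine coeff_criticalFlow_congr hd ?_ (constantCoeff_momentSeries d) fun j hj => ?_
  · rw [← coeff_zero_eq_constantCoeff_apply, coeff_mk, momentPoly_zero, dite_eq_ite, ite_self]
  · rw [coeff_mk, momentSeries, coeff_mk, dif_pos hj]

theorem momentSeries_mem_weightGE {d : ℕ} (hd : d ≠ 0) : momentSeries K d ∈ weightGE K 1 := by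
  intro k
  rw [momentSeries, coeff_mk]
  induction k using Nat.strong_induction_on with
  | _ k ih =>
    set N : K[X]⟦X⟧ := PowerSeries.mk fun j => if _h : j < k then momentPoly K d j else 0 with hN
    have hN1 : N ∈ weightGE K 1 := fun j i hij => by
      rw [hN, coeff_mk]
      split_ifs with hj
      · exact ih j hj i hij
      · exact Polynomial.coeff_zero i
    have hflow : criticalFlow d N ∈ weightGE K 2 := by
      have hN2 : (((d : ℚ) - 1) / (2 * d)) • N ^ 2 ∈ weightGE K 2 :=
        Submodule.smul_of_tower_mem _ _ (pow_two N ▸ mul_mem_weightGE hN1 hN1)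
      have hrest := weightGE_antitone (by lia : 2 ≤ 3) (criticalFlow_sub_mem_weightGE hd hN1)
      simpa using add_mem (add_mem hrest hN2) X_mem_weightGE
    intro i hi
    rcases i with _ | i
    · exact coeff_zero_momentPoly d k
    · rw [momentPoly, coeff_succ_polyPrimitive, hflow k i (by lia), smul_zero]

theorem natDegree_momentPoly_le {d : ℕ} (hd : d ≠ 0) (k : ℕ) :
    (momentPoly K d k).natDegree ≤ 2 * k - 1 :=
  Polynomial.natDegree_le_iff_coeff_eq_zero.mpr fun i hi => by
    have := momentSeries_mem_weightGE (K := K) hd k i (by lia)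
    rwa [momentSeries, coeff_mk] at this

theorem coeff_coeff_momentSeries_sq {d : ℕ} (hd : d ≠ 0) (k : ℕ) :
    (coeff k (momentSeries K d ^ 2)).coeff (2 * k - 2) = ∑ j ∈ Icc 1 (k - 1),
      (momentPoly K d j).coeff (2 * j - 1) * (momentPoly K d (k - j)).coeff (2 * (k - j) - 1) := by
  rw [pow_two, coeff_mul, Polynomial.finsetSum_coeff,
    Finset.Nat.sum_antidiagonal_eq_sum_range_succ_mk]
  have hsub : Icc 1 (k - 1) ⊆ range k.succ := fun j => by
    rw [mem_Icc, mem_range]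
    lia
  simp only [momentSeries, coeff_mk]
  rw [← sum_subset hsub]
  · refine sum_congr rfl fun j hj => ?_
    rw [mem_Icc] at hj
    rw [show 2 * k - 2 = (2 * j - 1) + (2 * (k - j) - 1) by lia,
      Polynomial.coeff_mul_add_eq_of_natDegree_le (natDegree_momentPoly_le hd _)
        (natDegree_momentPoly_le hd _)]
  · intro j hj hj'
    rw [mem_range] at hj
    rw [mem_Icc] at hj'
    obtain rfl | rfl : j = 0 ∨ j = k := by lia
    · simp [momentPoly_zero]
    · simp [momentPoly_zero]

theorem coeff_momentPoly {d : ℕ} (hd : d ≠ 0) {k : ℕ} (hk : 1 ≤ k) :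
    (2 * (k : ℚ) - 1) • (momentPoly K d k).coeff (2 * k - 1) =
      (if k = 1 then 1 else 0) + (((d : ℚ) - 1) / (2 * d)) • ∑ j ∈ Icc 1 (k - 1),
        (momentPoly K d j).coeff (2 * j - 1) *
          (momentPoly K d (k - j)).coeff (2 * (k - j) - 1) := by
  have hcoeff : (2 * (k : ℚ) - 1) • (momentPoly K d k).coeff (2 * k - 1) =
      (Polynomial.derivative (momentPoly K d k)).coeff (2 * k - 2) := by
    have hk2 : ((2 * k - 2 : ℕ) : ℚ) + 1 = 2 * k - 1 := by
      rw [Nat.cast_sub (by lia)]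
      push_cast
      ring
    have hcast : ((2 * k - 2 : ℕ) + 1 : K) = algebraMap ℚ K (2 * k - 1) := by
      rw [← hk2, map_add, map_natCast, map_one]
    rw [Polynomial.coeff_derivative, hcast, mul_comm _ (algebraMap ℚ K _), ← Algebra.smul_def,
      show 2 * k - 2 + 1 = 2 * k - 1 by lia]
  have hflow := criticalFlow_sub_mem_weightGE hd (momentSeries_mem_weightGE (K := K) hd) k
    (2 * k - 2) (by lia)
  rw [map_sub, map_sub, Polynomial.coeff_sub, Polynomial.coeff_sub, PowerSeries.coeff_smul,
    Polynomial.coeff_smul, coeff_coeff_momentSeries_sq hd, ← derivative_momentPoly hd, ← hcoeff,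
    sub_sub, sub_eq_zero] at hflow
  rw [hflow, coeff_X]
  split_ifs with hk1 <;> simp [hk1]

end MomentPolynomials

section Identification

variable {K : Type*} [Field K]

/-- The series `-log (1 - D * x) / D`; its constant term `D ^ 0 / 0` is zero by convention. -/
noncomputable def logSeries (D : K) : K⟦X⟧ := PowerSeries.mk fun n => D ^ (n - 1) / n

theorem constantCoeff_logSeries (D : K) : constantCoeff (logSeries D) = 0 := by
  rw [← coeff_zero_eq_constantCoeff_apply, logSeries, coeff_mk, Nat.cast_zero, div_zero]

variable [CharZero K]

theorem one_sub_mul_derivative_logSeries (D : K) : (1 - C D * X) * d⁄dX K (logSeries D) = 1 := by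
  have hderiv : d⁄dX K (logSeries D) = PowerSeries.mk fun n => D ^ n := by
    ext n
    have hn : (n + 1 : K) ≠ 0 := by exact_mod_cast n.succ_ne_zero
    rw [coeff_derivative, logSeries, coeff_mk, coeff_mk, Nat.add_sub_cancel]
    push_cast
    rw [div_mul_cancel₀ _ hn]
  rw [hderiv]
  ext n
  rw [sub_mul, one_mul, mul_assoc, map_sub, coeff_C_mul, coeff_mk]
  rcases n with _ | n
  · simp
  · rw [coeff_succ_X_mul, coeff_mk, pow_succ', sub_self, coeff_one, if_neg n.succ_ne_zero]

theorem pow_mul_one_sub_eq_one {d : ℕ} {Y : K⟦X⟧} (hY : constantCoeff Y = 1)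
    (hode : d⁄dX K Y = Y ^ (d + 1)) : Y ^ d * (1 - C (d : K) * X) = 1 := by
  have hYinv : Y * Y⁻¹ = 1 := PowerSeries.mul_inv_cancel Y (by simp [hY])
  have hinv : Y⁻¹ ^ d = 1 - C (d : K) * X := by
    apply derivative.ext
    · have hpow : Y⁻¹ ^ (d - 1) * Y⁻¹ ^ 2 * Y ^ (d + 1) * d = d := by
        rcases d with _ | d
        · simp
        · have hYinv' : (Y * Y⁻¹) ^ (d + 2) = 1 := by rw [hYinv, one_pow]
          rw [Nat.add_sub_cancel, ← pow_add, mul_comm (Y⁻¹ ^ _), ← mul_pow, hYinv', one_mul]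
      rw [derivative_pow, derivative_inv', hode, map_sub, derivative_one, Derivation.leibniz,
        derivative_C, derivative_X, smul_zero, smul_eq_mul, map_natCast]
      linear_combination -hpow
    · simp [hY]
  rw [← hinv, ← mul_pow, hYinv, one_pow]

theorem aeval_momentPoly_eq {d : ℕ} (hd : d ≠ 0) {T : K⟦X⟧} (hT : constantCoeff T = 0)
    {N : K⟦X⟧⟦X⟧} (hN₀ : constantCoeff N = 0) (hN : ∀ k, constantCoeff (coeff k N) = 0)
    (hode : ∀ k, d⁄dX K (coeff k N) = d⁄dX K T * coeff k (criticalFlow d N)) (k : ℕ) :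
    Polynomial.aeval T (momentPoly K d k) = coeff k N := by
  set f : K[X] →+* K⟦X⟧ := (Polynomial.aeval T : K[X] →ₐ[K] K⟦X⟧).toRingHom
  have hf₀ (P : K[X]) (hP : P.coeff 0 = 0) : constantCoeff (Polynomial.aeval T P) = 0 := by
    rw [Polynomial.aeval_def, Polynomial.hom_eval₂, hT, Polynomial.eval₂_at_zero, hP, map_zero]
  induction k using Nat.strong_induction_on with
  | _ k ih =>
    have hflow : f (coeff k (criticalFlow d (momentSeries K d))) = coeff k (criticalFlow d N) := by
      rw [← PowerSeries.coeff_map, map_criticalFlow]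
      refine coeff_criticalFlow_congr hd ?_ hN₀ fun j hj => ?_
      · rw [← coeff_zero_eq_constantCoeff_apply, PowerSeries.coeff_map,
          coeff_zero_eq_constantCoeff_apply, constantCoeff_momentSeries, map_zero]
      · rw [PowerSeries.coeff_map, momentSeries, coeff_mk]
        exact ih j hj
    apply derivative.ext
    · rw [Derivation.map_aeval, derivative_momentPoly hd, hode, ← hflow, smul_eq_mul, mul_comm]
      rfl
    · rw [hf₀ _ (coeff_zero_momentPoly d k), hN k]

end Identification

section NormalisedMoments

variable {d : ℕ} {r : ℕ → ℕ → ℝ} {b : ℕ → ℝ}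

/-- The exponential generating function of the total weights of the trees, the empty tree being
given the weight `1`. -/
noncomputable def totalSeries (b : ℕ → ℝ) : ℝ⟦X⟧ := 1 + egf b

/-- The series `N` in `t` for which `C (totalSeries b) * (1 + N) = 1 + R`, where `R` is the moment
transform of the root-cluster weights. -/
noncomputable def normalisedMoments (r : ℕ → ℕ → ℝ) (b : ℕ → ℝ) : ℝ⟦X⟧⟦X⟧ :=
  C (totalSeries b)⁻¹ * (1 + momentTransform ℝ (egf (clusterPoly r))) - 1

theorem clusterRec.constantCoeff_totalSeries {p : ℝ} {φ : ℕ → ℝ} (h : clusterRec p φ r b) :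
    constantCoeff (totalSeries b) = 1 := by
  rw [totalSeries, map_add, constantCoeff_egf, h.total_zero, map_one, add_zero]

theorem clusterRec.totalSeries_mul_inv {p : ℝ} {φ : ℕ → ℝ} (h : clusterRec p φ r b) :
    totalSeries b * (totalSeries b)⁻¹ = 1 :=
  PowerSeries.mul_inv_cancel _ (by simp [h.constantCoeff_totalSeries])

theorem clusterRec.C_totalSeries_mul {p : ℝ} {φ : ℕ → ℝ} (h : clusterRec p φ r b) :
    C (totalSeries b) * (1 + normalisedMoments r b) =
      1 + momentTransform ℝ (egf (clusterPoly r)) := by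
  rw [normalisedMoments, add_sub_cancel, ← mul_assoc, ← map_mul, h.totalSeries_mul_inv, map_one,
    one_mul]

theorem clusterRec.constantCoeff_normalisedMoments {p : ℝ} {φ : ℕ → ℝ} (h : clusterRec p φ r b) :
    constantCoeff (normalisedMoments r b) = 0 := by
  have h₀ : constantCoeff (momentTransform ℝ (egf (clusterPoly r))) = egf b := by
    rw [← coeff_zero_eq_constantCoeff_apply, h.coeff_zero_momentTransform]
  rw [normalisedMoments, map_sub, map_mul, map_add, map_one, h₀, constantCoeff_C, ← totalSeries,
    mul_comm, h.totalSeries_mul_inv, sub_self]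

theorem clusterRec.constantCoeff_coeff_normalisedMoments {p : ℝ} {φ : ℕ → ℝ}
    (h : clusterRec p φ r b) (k : ℕ) : constantCoeff (coeff k (normalisedMoments r b)) = 0 := by
  have hR : constantCoeff (coeff k (momentTransform ℝ (egf (clusterPoly r)))) = 0 := by
    rw [← coeff_zero_eq_constantCoeff_apply, coeff_coeff_momentTransform_egf]
    simp
  have hinv : constantCoeff (totalSeries b)⁻¹ = 1 := by simp [h.constantCoeff_totalSeries]
  rw [normalisedMoments, map_sub, coeff_C_mul, map_sub, map_mul, hinv, map_add, map_add, hR,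
    add_zero, one_mul, sub_self]

theorem clusterRec.one_add_smul_add_smul (h : clusterRec (1 / (d : ℝ)) (daryWeight d) r b) :
    1 + ((1 / (d : ℝ)) • momentTransform ℝ (egf (clusterPoly r)) +
      (1 - 1 / (d : ℝ)) • C (egf b)) =
        C (totalSeries b) * (1 + (d : ℚ)⁻¹ • normalisedMoments r b) := by
  have hY : C (totalSeries b) = 1 + C (egf b) := by rw [totalSeries, map_add, map_one]
  have hmul : C (totalSeries b) * (d : ℚ)⁻¹ • normalisedMoments r b =
      (d : ℝ)⁻¹ • (momentTransform ℝ (egf (clusterPoly r)) - C (egf b)) := by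
    rw [inv_natCast_smul_eq ℚ ℝ, mul_smul_comm]
    congr 1
    linear_combination h.C_totalSeries_mul - hY
  rw [mul_add, mul_one, hmul, hY, one_div, smul_sub, sub_smul, one_smul]
  abel

theorem clusterRec.derivative_coeff_eq (h : clusterRec (1 / (d : ℝ)) (daryWeight d) r b) (k : ℕ) :
    d⁄dX ℝ (coeff k (momentTransform ℝ (egf (clusterPoly r)))) = totalSeries b ^ d *
      coeff k (criticalFlow d (normalisedMoments r b) + (1 + normalisedMoments r b)) := by
  rw [h.derivative_coeff_momentTransform, h.one_add_smul_add_smul, mul_pow, ← map_pow,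
    mul_left_comm, coeff_C_mul, criticalFlow, sub_sub, sub_add_cancel]

theorem clusterRec.derivative_totalSeries (h : clusterRec (1 / (d : ℝ)) (daryWeight d) r b) :
    d⁄dX ℝ (totalSeries b) = totalSeries b ^ d := by
  have h₀ := h.derivative_coeff_eq 0
  rwa [h.coeff_zero_momentTransform, coeff_zero_eq_constantCoeff_apply, map_add, map_add, map_one,
    constantCoeff_criticalFlow h.constantCoeff_normalisedMoments,
    h.constantCoeff_normalisedMoments, zero_add, add_zero, mul_one,
    ← zero_add (d⁄dX ℝ (egf b)), ← derivative_one, ← map_add, ← totalSeries] at h₀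

theorem clusterRec.derivative_coeff_normalisedMoments (hd : 1 ≤ d)
    (h : clusterRec (1 / (d : ℝ)) (daryWeight d) r b) (k : ℕ) :
    d⁄dX ℝ (coeff k (normalisedMoments r b)) =
      totalSeries b ^ (d - 1) * coeff k (criticalFlow d (normalisedMoments r b)) := by
  set Y := totalSeries b with hY
  set N := normalisedMoments r b with hN
  have hone (F : ℝ⟦X⟧⟦X⟧) : d⁄dX ℝ (coeff k (1 + F)) = d⁄dX ℝ (coeff k F) := by
    rw [map_add, map_add, coeff_one]
    split_ifs <;> simp
  have hprod : Y * coeff k (1 + N) = coeff k (1 + momentTransform ℝ (egf (clusterPoly r))) := by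
    rw [← coeff_C_mul, h.C_totalSeries_mul]
  have hderiv := congrArg (d⁄dX ℝ) hprod
  rw [Derivation.leibniz, hone, hone, h.derivative_coeff_eq, h.derivative_totalSeries, ← hY, ← hN,
    smul_eq_mul, smul_eq_mul, map_add (coeff k) (criticalFlow d N)] at hderiv
  have hpow : Y ^ d = Y ^ (d - 1) * Y := by rw [← pow_succ, Nat.sub_add_cancel hd]
  have hYinv : Y * Y⁻¹ = 1 := h.totalSeries_mul_inv
  linear_combination Y⁻¹ * hderiv + Y⁻¹ * coeff k (criticalFlow d N) * hpow +
    (Y ^ (d - 1) * coeff k (criticalFlow d N) - d⁄dX ℝ (coeff k N)) * hYinv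

theorem clusterRec.totalSeries_pow_mul (hd : 1 ≤ d)
    (h : clusterRec (1 / (d : ℝ)) (daryWeight d) r b) :
    totalSeries b ^ (d - 1) * (1 - C ((d : ℝ) - 1) * X) = 1 := by
  rw [← Nat.cast_pred hd]
  refine pow_mul_one_sub_eq_one h.constantCoeff_totalSeries ?_
  rw [Nat.sub_add_cancel hd, h.derivative_totalSeries]

theorem clusterRec.one_sub_mul_derivative_totalSeries (hd : 1 ≤ d)
    (h : clusterRec (1 / (d : ℝ)) (daryWeight d) r b) :
    (1 - C ((d : ℝ) - 1) * X) * d⁄dX ℝ (totalSeries b) = totalSeries b := by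
  obtain ⟨d, rfl⟩ := Nat.exists_eq_add_of_le' hd
  have hpow := h.totalSeries_pow_mul hd
  rw [Nat.add_sub_cancel] at hpow
  rw [h.derivative_totalSeries, pow_succ, ← mul_assoc, mul_comm (_ - _), hpow, one_mul]

theorem clusterRec.coeff_momentTransform_eq (hd : 1 ≤ d)
    (h : clusterRec (1 / (d : ℝ)) (daryWeight d) r b) {k : ℕ} (hk : 1 ≤ k) :
    coeff k (momentTransform ℝ (egf (clusterPoly r))) =
      totalSeries b * Polynomial.aeval (logSeries ((d : ℝ) - 1)) (momentPoly ℝ d k) := by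
  have hT : d⁄dX ℝ (logSeries ((d : ℝ) - 1)) = totalSeries b ^ (d - 1) :=
    (left_inv_eq_right_inv (h.totalSeries_pow_mul hd) (one_sub_mul_derivative_logSeries _)).symm
  have hN := aeval_momentPoly_eq (d := d) (by lia) (constantCoeff_logSeries _)
    h.constantCoeff_normalisedMoments h.constantCoeff_coeff_normalisedMoments
    (fun j => by rw [hT, h.derivative_coeff_normalisedMoments hd]) k
  have hcoeff (F : ℝ⟦X⟧⟦X⟧) : coeff k (1 + F) = coeff k F := by
    rw [map_add, coeff_one, if_neg (by lia), zero_add]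
  rw [hN, ← hcoeff, ← h.C_totalSeries_mul, coeff_C_mul, hcoeff]

end NormalisedMoments

section LogIncrements

theorem tendsto_log_natCast_atTop : Tendsto (fun n : ℕ => Real.log n) atTop atTop :=
  Real.tendsto_log_atTop.comp tendsto_natCast_atTop_atTop

theorem eventually_log_natCast_pos : ∀ᶠ n : ℕ in atTop, 0 < Real.log n :=
  tendsto_log_natCast_atTop.eventually_gt_atTop 0

theorem tendsto_mul_log_succ_sub_log :
    Tendsto (fun n : ℕ => n * (Real.log (n + 1 : ℕ) - Real.log n)) atTop (𝓝 1) := by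
  refine ((Real.tendsto_mul_log_one_add_div_atTop 1).comp tendsto_natCast_atTop_atTop).congr' ?_
  filter_upwards [eventually_gt_atTop 0] with n hn
  have hn' : (0 : ℝ) < n := by exact_mod_cast hn
  rw [Function.comp_apply, ← Real.log_div (by positivity) hn'.ne', Nat.cast_succ, add_div,
    div_self hn'.ne']

theorem tendsto_log_succ_div_log :
    Tendsto (fun n : ℕ => Real.log (n + 1 : ℕ) / Real.log n) atTop (𝓝 1) := by
  have hincr := (Real.tendsto_log_nat_add_one_sub_log.mul
    tendsto_log_natCast_atTop.inv_tendsto_atTop).const_add 1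
  rw [mul_zero, add_zero] at hincr
  refine hincr.congr' ?_
  filter_upwards [eventually_log_natCast_pos] with n hn
  rw [Nat.cast_succ, Pi.inv_apply]
  field_simp
  ring

theorem tendsto_mul_log_pow_succ_sub_div (m : ℕ) :
    Tendsto (fun n : ℕ => n * (Real.log (n + 1 : ℕ) ^ (m + 1) - Real.log n ^ (m + 1)) /
      Real.log n ^ m) atTop (𝓝 (m + 1)) := by
  have hfactor := tendsto_mul_log_succ_sub_log.mul
    (tendsto_finsetSum (range (m + 1)) fun i _ => tendsto_log_succ_div_log.pow i)
  simp only [one_pow, sum_const, card_range, nsmul_eq_mul, mul_one, one_mul, Nat.cast_succ]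
    at hfactor
  refine hfactor.congr' ?_
  filter_upwards [eventually_log_natCast_pos] with n hn
  rw [← (Commute.all _ _).mul_geom_sum₂ (m + 1), ← mul_assoc, mul_div_assoc, sum_div, Nat.cast_succ]
  congr 1
  refine sum_congr rfl fun i hi => ?_
  have him : i + (m - i) = m := by
    rw [mem_range] at hi
    lia
  rw [Nat.add_sub_cancel, ← him, Nat.add_sub_cancel_left, pow_add, div_pow]
  field_simp

theorem monotone_log_natCast_pow (m : ℕ) : Monotone fun n : ℕ => Real.log n ^ m := by
  refine monotone_nat_of_le_succ fun n => pow_le_pow_left₀ (Real.log_natCast_nonneg n) ?_ m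
  rcases n.eq_zero_or_pos with rfl | hn
  · simp
  · exact Real.log_le_log (by exact_mod_cast hn) (by simp)

theorem eventually_log_pow_lt_log_succ_pow (m : ℕ) :
    ∀ᶠ n : ℕ in atTop, Real.log n ^ (m + 1) < Real.log (n + 1 : ℕ) ^ (m + 1) := by
  filter_upwards [eventually_gt_atTop 0] with n hn
  have hlog : Real.log n < Real.log (n + 1 : ℕ) :=
    Real.log_lt_log (by exact_mod_cast hn) (by simp)
  exact pow_lt_pow_left₀ hlog (Real.log_natCast_nonneg n) m.succ_ne_zero

end LogIncrements

section StolzCesaro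

theorem tendsto_div_of_tendsto_sub_div_sub {u v : ℕ → ℝ} {l : ℝ} (hv : Monotone v)
    (hv_lt : ∀ᶠ n in atTop, v n < v (n + 1)) (hv_top : Tendsto v atTop atTop)
    (h : Tendsto (fun n => (u (n + 1) - u n) / (v (n + 1) - v n)) atTop (𝓝 l)) :
    Tendsto (fun n => u n / v n) atTop (𝓝 l) := by
  set f : ℕ → ℝ := fun n => u n - l * v n with hf
  have hincr : (fun n => f (n + 1) - f n) =o[atTop] fun n => v (n + 1) - v n := by
    rw [isLittleO_iff_tendsto' (hv_lt.mono fun n hn h₀ => absurd h₀ (sub_pos.mpr hn).ne')]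
    refine (sub_self l ▸ h.sub_const l).congr' (hv_lt.mono fun n hn => ?_)
    have hpos : v (n + 1) - v n ≠ 0 := (sub_pos.mpr hn).ne'
    simp only [hf]
    field_simp
    ring
  have hsum : (fun n => f n - f 0) =o[atTop] fun n => v n - v 0 := by
    have hdiv : Tendsto (fun n => v n - v 0) atTop atTop := by
      simpa only [sub_eq_add_neg] using tendsto_atTop_add_const_right _ (-v 0) hv_top
    simpa only [sum_range_sub] using hincr.sum_range (fun n => sub_nonneg.mpr (hv n.le_succ))
      (by simpa only [sum_range_sub] using hdiv)
  have hconst (c : ℝ) : (fun _ => c) =o[atTop] v :=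
    isLittleO_const_left.mpr (.inr (tendsto_norm_atTop_atTop.comp hv_top))
  have hfv : f =o[atTop] v := by
    simpa only [sub_add_cancel] using
      (hsum.trans_isBigO ((isBigO_refl v _).sub (hconst _).isBigO)).add (hconst (f 0))
  refine (add_zero l ▸ hfv.tendsto_div_nhds_zero.const_add l).congr' ?_
  filter_upwards [hv_top.eventually_gt_atTop 0] with n hn
  simp only [hf]
  field_simp
  ring

end StolzCesaro

section CoefficientAsymptotics

variable {D : ℝ} {Y T : ℝ⟦X⟧}

theorem coeff_succ_of_one_sub_mul_derivative {F G : ℝ⟦X⟧}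
    (h : (1 - C D * X) * d⁄dX ℝ F = G) (n : ℕ) :
    (n + 1) * coeff (n + 1) F = D * n * coeff n F + coeff n G := by
  rw [← h, sub_mul, one_mul, map_sub, coeff_derivative, mul_assoc (C D), coeff_C_mul]
  rcases n with _ | n
  · simp
  · rw [coeff_succ_X_mul, coeff_derivative]
    push_cast
    ring

theorem coeff_succ_of_one_sub_mul_derivative_eq_self (hY : (1 - C D * X) * d⁄dX ℝ Y = Y) (n : ℕ) :
    coeff (n + 1) Y = (1 + D * n) * coeff n Y / (n + 1) := by
  have hn : (n + 1 : ℝ) ≠ 0 := by positivity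
  rw [eq_div_iff hn, mul_comm, coeff_succ_of_one_sub_mul_derivative hY]
  ring

theorem coeff_pos_of_one_sub_mul_derivative_eq_self (hD : 0 ≤ D) (hY₀ : 0 < constantCoeff Y)
    (hY : (1 - C D * X) * d⁄dX ℝ Y = Y) (n : ℕ) : 0 < coeff n Y := by
  induction n with
  | zero => rwa [coeff_zero_eq_constantCoeff_apply]
  | succ n ih =>
    rw [coeff_succ_of_one_sub_mul_derivative_eq_self hY]
    positivity

theorem coeff_mul_pow_succ_div_sub (hD : 0 ≤ D) (hY₀ : 0 < constantCoeff Y)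
    (hY : (1 - C D * X) * d⁄dX ℝ Y = Y) (hT : (1 - C D * X) * d⁄dX ℝ T = 1) (m n : ℕ) :
    coeff (n + 1) (Y * T ^ (m + 1)) / coeff (n + 1) Y - coeff n (Y * T ^ (m + 1)) / coeff n Y =
      (m + 1) * (coeff n (Y * T ^ m) / coeff n Y) / (1 + D * n) := by
  have hode : (1 - C D * X) * d⁄dX ℝ (Y * T ^ (m + 1)) =
      Y * T ^ (m + 1) + C (m + 1 : ℝ) * (Y * T ^ m) := by
    have hcast : C (m + 1 : ℝ) = (m + 1 : ℝ⟦X⟧) := by simp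
    rw [Derivation.leibniz, derivative_pow, hcast, smul_eq_mul, smul_eq_mul, Nat.add_sub_cancel]
    push_cast
    linear_combination T ^ (m + 1) * hY + Y * (m + 1) * T ^ m * hT
  have hpos := coeff_pos_of_one_sub_mul_derivative_eq_self hD hY₀ hY n
  have hrec : coeff (n + 1) (Y * T ^ (m + 1)) =
      ((1 + D * n) * coeff n (Y * T ^ (m + 1)) + (m + 1) * coeff n (Y * T ^ m)) / (n + 1) := by
    have hn : (n + 1 : ℝ) ≠ 0 := by positivity
    rw [eq_div_iff hn, mul_comm, coeff_succ_of_one_sub_mul_derivative hode, map_add, coeff_C_mul]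
    ring
  have hDn : 1 + D * n ≠ 0 := by positivity
  rw [hrec, coeff_succ_of_one_sub_mul_derivative_eq_self hY]
  field_simp
  ring

theorem tendsto_natCast_div_one_add_mul (hD : D ≠ 0) :
    Tendsto (fun n : ℕ => n / (1 + D * n)) atTop (𝓝 (1 / D)) := by
  have hlim := (tendsto_natCast_div_add_atTop (1 / D)).const_mul (1 / D)
  rw [mul_one] at hlim
  refine hlim.congr fun n => ?_
  rw [div_mul_div_comm, one_mul, mul_add, mul_one_div_cancel hD, add_comm]

theorem tendsto_coeff_mul_pow_div (hD : 0 < D) (hY₀ : 0 < constantCoeff Y)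
    (hY : (1 - C D * X) * d⁄dX ℝ Y = Y) (hT : (1 - C D * X) * d⁄dX ℝ T = 1) (m : ℕ) :
    Tendsto (fun n : ℕ => coeff n (Y * T ^ m) / coeff n Y / Real.log n ^ m) atTop
      (𝓝 (1 / D ^ m)) := by
  have hpos := coeff_pos_of_one_sub_mul_derivative_eq_self hD.le hY₀ hY
  induction m with
  | zero =>
    simp only [pow_zero, mul_one, div_one]
    exact tendsto_const_nhds.congr fun n => (div_self (hpos n).ne').symm
  | succ m ih =>
    have hm : (m + 1 : ℝ) ≠ 0 := by positivity
    refine tendsto_div_of_tendsto_sub_div_sub (monotone_log_natCast_pow (m + 1))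
      (eventually_log_pow_lt_log_succ_pow m)
      ((tendsto_pow_atTop m.succ_ne_zero).comp tendsto_log_natCast_atTop) ?_
    have hlim := ((ih.mul (tendsto_natCast_div_one_add_mul hD.ne')).const_mul (m + 1 : ℝ)).div
      (tendsto_mul_log_pow_succ_sub_div m) hm
    rw [mul_div_cancel_left₀ _ hm, one_div_mul_one_div, ← pow_succ] at hlim
    refine hlim.congr' ?_
    filter_upwards [eventually_log_pow_lt_log_succ_pow m, eventually_log_natCast_pos,
      eventually_gt_atTop 0] with n hlt hlog hn
    have hlt' := (sub_pos.mpr hlt).ne'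
    have hn' : (n : ℝ) ≠ 0 := by exact_mod_cast hn.ne'
    rw [coeff_mul_pow_succ_div_sub hD.le hY₀ hY hT, Pi.div_apply]
    field_simp

theorem tendsto_coeff_mul_aeval_div (hD : 0 < D) (hY₀ : 0 < constantCoeff Y)
    (hY : (1 - C D * X) * d⁄dX ℝ Y = Y) (hT : (1 - C D * X) * d⁄dX ℝ T = 1) {P : ℝ[X]} {m : ℕ}
    (hP : P.natDegree ≤ m) :
    Tendsto (fun n : ℕ => coeff n (Y * Polynomial.aeval T P) / coeff n Y / Real.log n ^ m) atTop
      (𝓝 (P.coeff m / D ^ m)) := by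
  have hterm (i : ℕ) (hi : i ∈ range (m + 1)) : Tendsto (fun n : ℕ =>
      P.coeff i * (coeff n (Y * T ^ i) / coeff n Y / Real.log n ^ i / Real.log n ^ (m - i)))
      atTop (𝓝 (if i = m then P.coeff m / D ^ m else 0)) := by
    have hlim := tendsto_coeff_mul_pow_div hD hY₀ hY hT i
    split_ifs with him
    · subst him
      simpa [div_eq_mul_inv] using hlim.const_mul (P.coeff i)
    · have hmi : m - i ≠ 0 := by
        rw [mem_range] at hi
        lia
      have hlog := (tendsto_pow_atTop hmi).comp tendsto_log_natCast_atTop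
      simpa using (hlim.div_atTop hlog).const_mul (P.coeff i)
  have hsum := tendsto_finsetSum _ hterm
  rw [sum_ite_eq', if_pos (self_mem_range_succ m)] at hsum
  refine hsum.congr fun n => ?_
  rw [Polynomial.aeval_eq_sum_range' (Nat.lt_succ_of_le hP), mul_sum, map_sum, sum_div, sum_div]
  refine sum_congr rfl fun i hi => ?_
  have him : i + (m - i) = m := Nat.add_sub_cancel' (by simpa [Nat.lt_succ_iff] using hi)
  rw [mul_smul_comm, PowerSeries.coeff_smul, smul_eq_mul, div_div _ (_ ^ i), ← pow_add, him,
    mul_div_assoc, mul_div_assoc]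

end CoefficientAsymptotics

section LeadingCoefficients

theorem factorial_mul_coeff_momentPoly_div {d : ℕ} (hd : 2 ≤ d) {E : ℕ → ℝ}
    (hE₁ : E 1 = 1 / ((d : ℝ) - 1))
    (hE : ∀ k : ℕ, 2 ≤ k → (2 * (k : ℝ) - 1) * E k =
      1 / (2 * (d : ℝ)) * ∑ j ∈ Icc 1 (k - 1), (k.choose j : ℝ) * E j * E (k - j))
    {k : ℕ} (hk : 1 ≤ k) :
    k.factorial * ((momentPoly ℝ d k).coeff (2 * k - 1) / ((d : ℝ) - 1) ^ (2 * k - 1)) = E k := by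
  have hd₀ : d ≠ 0 := by lia
  have hD : (0 : ℝ) < d - 1 := by
    rw [sub_pos]
    exact_mod_cast hd
  induction k using Nat.strong_induction_on with
  | _ k ih =>
    have hlead := coeff_momentPoly (K := ℝ) hd₀ hk
    rw [Rat.smul_def, Rat.smul_def] at hlead
    push_cast at hlead
    rcases hk.eq_or_lt' with rfl | hk₂
    · have hone : (momentPoly ℝ d 1).coeff 1 = 1 := by norm_num at hlead; exact hlead
      norm_num [hone, hE₁]
    · rw [if_neg hk₂.ne', zero_add] at hlead
      have hk' : (2 * (k : ℝ) - 1) ≠ 0 := by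
        have : (2 : ℝ) ≤ k := by exact_mod_cast hk₂
        linarith
      have hterm (j : ℕ) (hj : j ∈ Icc 1 (k - 1)) : (k.choose j : ℝ) * E j * E (k - j) =
          k.factorial * ((d : ℝ) - 1) / ((d : ℝ) - 1) ^ (2 * k - 1) *
            ((momentPoly ℝ d j).coeff (2 * j - 1) *
              (momentPoly ℝ d (k - j)).coeff (2 * (k - j) - 1)) := by
        rw [mem_Icc] at hj
        rw [← ih j (by lia) hj.1, ← ih (k - j) (by lia) (by lia), Nat.cast_choose ℝ (by lia),
          show 2 * k - 1 = 1 + (2 * j - 1) + (2 * (k - j) - 1) by lia, pow_add, pow_add]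
        field_simp
      apply mul_left_cancel₀ hk'
      rw [hE k hk₂, sum_congr rfl hterm, ← mul_sum]
      linear_combination k.factorial / ((d : ℝ) - 1) ^ (2 * k - 1) * hlead

end LeadingCoefficients

section Moments

theorem coeff_totalSeries (b : ℕ → ℝ) {n : ℕ} (hn : n ≠ 0) :
    coeff n (totalSeries b) = b n / n.factorial := by
  rw [totalSeries, map_add, coeff_one, if_neg hn, zero_add, coeff_egf, Rat.smul_def,
    div_eq_inv_mul]
  push_cast
  rfl

theorem clusterRec.moment_eq {d : ℕ} {r : ℕ → ℕ → ℝ} {b : ℕ → ℝ} (hd : 1 ≤ d)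
    (h : clusterRec (1 / (d : ℝ)) (daryWeight d) r b) {n k : ℕ} (hn : n ≠ 0) (hk : 1 ≤ k) :
    (∑ j ∈ Icc 1 n, (j : ℝ) ^ k * r n j) / b n = k.factorial *
      (coeff n (totalSeries b *
        Polynomial.aeval (logSeries ((d : ℝ) - 1)) (momentPoly ℝ d k)) /
          coeff n (totalSeries b)) := by
  have hn' : (n.factorial : ℝ) ≠ 0 := by positivity
  have hk' : (k.factorial : ℝ) ≠ 0 := by positivity
  rw [← h.coeff_momentTransform_eq hd hk, coeff_coeff_momentTransform_egf, coeff_totalSeries b hn]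
  field_simp

end Moments

end

/-- for random increasing `d`-ary trees at criticality `p = 1/d`, the `k`-th
moment of the root-cluster size satisfies `m_k(n) ~ E_k (log n)^{2k-1}`. -/
theorem stmt17 (d : ℕ) (hd : 2 ≤ d)
    (r : ℕ → ℕ → ℝ) (b : ℕ → ℝ)
    (hrec : clusterRec (1 / (d : ℝ))
      (fun δ => if δ ≤ d then ((d.factorial : ℝ) / ((d - δ).factorial : ℝ)) else 0) r b)
    (E : ℕ → ℝ) (hE1 : E 1 = 1 / ((d : ℝ) - 1))
    (hEk : ∀ k : ℕ, 2 ≤ k →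
      (2 * (k : ℝ) - 1) * E k
        = (1 / (2 * (d : ℝ))) *
            ∑ j ∈ Finset.Icc 1 (k - 1), (k.choose j : ℝ) * E j * E (k - j))
    (k : ℕ) (hk : 1 ≤ k) :
    Tendsto (fun n : ℕ =>
        ((∑ j ∈ Finset.Icc 1 n, (j : ℝ) ^ k * r n j) / b n) / Real.log n ^ (2 * k - 1))
      atTop (nhds (E k)) := by
  have h : clusterRec (1 / (d : ℝ)) (daryWeight d) r b := hrec
  have hD : (0 : ℝ) < d - 1 := sub_pos.mpr (by exact_mod_cast hd)
  have hY₀ : 0 < PowerSeries.constantCoeff (totalSeries b) :=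
    h.constantCoeff_totalSeries ▸ one_pos
  have hlim := (tendsto_coeff_mul_aeval_div hD hY₀
    (h.one_sub_mul_derivative_totalSeries (by lia)) (one_sub_mul_derivative_logSeries _)
    (natDegree_momentPoly_le (K := ℝ) (by lia : d ≠ 0) k)).const_mul (k.factorial : ℝ)
  rw [factorial_mul_coeff_momentPoly_div hd hE1 hEk hk] at hlim
  refine hlim.congr' ?_
  filter_upwards [eventually_ne_atTop 0] with n hn
  rw [h.moment_eq (by lia) hn hk, mul_div_assoc]
end

section
/- Let α and p be real numbers and consider the 4×4 real matrix A^c with rows (α+p, 1-p, 0, 0), (1-p, α+p, 0, 0), (0, 1-p, 0, 0), (1-p, 0, 0, 0). Then the characteristic polynomial of A^c is λ^2·(λ-(1+α))·(λ-(2p+α-1)); in particular the eigenvalues of A^c are 1+α, 2p+α-1, and 0 (the latter with algebraic multiplicity two). Moreover, if α ≠ -1, α ≠ 1-2p, and p ≠ 1, then A^c is diagonalizable over ℝ. -/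
/-! The second block column of `A^c` vanishes because the cluster-counting balls have activity `0`,
so `A^c` is block lower triangular with blocks `B`, `0` on the diagonal, where `B` is the `2 × 2`
circulant matrix with eigenvalues `1 + α` and `2p + α - 1`, and the characteristic polynomial is
that of `B` times `λ²`. If `B` is invertible, then `[B 0; C 0] [B 0; C 1] = [B 0; C 1] [B 0; 0 0]`,
which makes `A^c` similar to `diag(B, 0)`; and `B` is diagonalized by `[1 1; 1 -1]`. -/

open Matrix Polynomial

variable {m n R : Type*} [CommRing R]
  [Fintype m] [DecidableEq m] [Fintype n] [DecidableEq n]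

/-- Diagonalizability of a square matrix over a commutative ring: similarity to a diagonal matrix.
The conjugating matrix `P` is required to be a unit, so that `P⁻¹` is its genuine inverse. -/
def IsDiagonalizable (A : Matrix n n R) : Prop :=
  ∃ P D : Matrix n n R, IsUnit P ∧ D.IsDiag ∧ A = P * D * P⁻¹

namespace IsDiagonalizable

theorem of_isDiag {D : Matrix n n R} (hD : D.IsDiag) : IsDiagonalizable D :=
  ⟨1, D, isUnit_one, hD, by rw [inv_one, one_mul, mul_one]⟩

theorem of_mul_eq_mul {A B P : Matrix n n R} (hB : IsDiagonalizable B) (hP : IsUnit P)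
    (h : A * P = P * B) : IsDiagonalizable A := by
  obtain ⟨Q, D, hQ, hD, rfl⟩ := hB
  refine ⟨P * Q, D, hP.mul hQ, hD, ?_⟩
  calc
    A = A * P * P⁻¹ := (mul_nonsing_inv_cancel_right P A ((isUnit_iff_isUnit_det P).mp hP)).symm
    _ = P * Q * D * (P * Q)⁻¹ := by simp only [h, Matrix.mul_inv_rev, Matrix.mul_assoc]

theorem reindex {A : Matrix m m R} (hA : IsDiagonalizable A) (e : m ≃ n) :
    IsDiagonalizable (Matrix.reindex e e A) := by
  obtain ⟨P, D, hP, hD, rfl⟩ := hA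
  refine ⟨Matrix.reindex e e P, Matrix.reindex e e D,
    (isUnit_submatrix_equiv e.symm e.symm).mpr hP, hD.submatrix e.symm.injective, ?_⟩
  rw [inv_reindex]
  simp only [reindex_apply, submatrix_mul_equiv]

theorem fromBlocks {A : Matrix m m R} {B : Matrix n n R} (hA : IsDiagonalizable A)
    (hB : IsDiagonalizable B) : IsDiagonalizable (Matrix.fromBlocks A 0 0 B) := by
  obtain ⟨P, D, hP, hD, rfl⟩ := hA
  obtain ⟨Q, E, hQ, hE, rfl⟩ := hB
  refine ⟨Matrix.fromBlocks P 0 0 Q, Matrix.fromBlocks D 0 0 E,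
    isUnit_fromBlocks_zero₁₂.mpr ⟨hP, hQ⟩, hD.fromBlocks hE, ?_⟩
  rw [inv_fromBlocks_zero₁₂_of_isUnit_iff P 0 Q (iff_of_true hP hQ)]
  simp [fromBlocks_multiply]

theorem fromBlocks_zero_right {A : Matrix m m R} (hA : IsDiagonalizable A) (hA' : IsUnit A)
    (C : Matrix n m R) : IsDiagonalizable (Matrix.fromBlocks A 0 C 0) := by
  have hP : IsUnit (Matrix.fromBlocks A 0 C 1) :=
    isUnit_fromBlocks_zero₁₂.mpr ⟨hA', isUnit_one⟩
  refine (hA.fromBlocks (of_isDiag isDiag_zero)).of_mul_eq_mul hP ?_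
  simp [fromBlocks_multiply]

theorem circulant_fin_two (h₂ : IsUnit (2 : R)) (a b : R) :
    IsDiagonalizable !![a, b; b, a] := by
  have hP : IsUnit (!![1, 1; 1, -1] : Matrix (Fin 2) (Fin 2) R) := by
    rw [isUnit_iff_isUnit_det, det_fin_two_of]
    convert! h₂.neg using 1
    ring
  refine (of_isDiag (isDiag_diagonal ![a + b, a - b])).of_mul_eq_mul hP ?_
  ext i j
  fin_cases i <;> fin_cases j <;> simp <;> ring

end IsDiagonalizable

theorem isUnit_circulant_fin_two_iff {a b : R} :
    IsUnit !![a, b; b, a] ↔ IsUnit (a + b) ∧ IsUnit (a - b) := by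
  rw [isUnit_iff_isUnit_det, det_fin_two_of, ← IsUnit.mul_iff, mul_self_sub_mul_self]

theorem charpoly_circulant_fin_two (a b : R) :
    charpoly !![a, b; b, a] = (X - C (a + b)) * (X - C (a - b)) := by
  have hchar : charmatrix !![a, b; b, a] = !![X - C a, -C b; -C b, X - C a] := by
    ext1 i j
    fin_cases i <;> fin_cases j <;> simp
  rw [charpoly, hchar, det_fin_two_of, C_add, C_sub]
  ring

theorem charpoly_fromBlocks_zero_right (A : Matrix m m R) (C : Matrix n m R) :
    (fromBlocks A 0 C 0).charpoly = X ^ Fintype.card n * A.charpoly := by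
  rw [charpoly_fromBlocks_zero₁₂, charpoly_zero, mul_comm]

/-- The intensity matrix `A^c` of the urn, over an arbitrary commutative ring. The ball types are,
in this order, red weight, blue weight, red clusters and blue clusters. -/
def intensityMatrix (α p : R) : Matrix (Fin 4) (Fin 4) R :=
  !![α + p, 1 - p, 0, 0;
     1 - p, α + p, 0, 0;
     0, 1 - p, 0, 0;
     1 - p, 0, 0, 0]

theorem intensityMatrix_eq_reindex_fromBlocks (α p : R) :
    intensityMatrix α p =
      reindex (finSumFinEquiv (m := 2) (n := 2)) (finSumFinEquiv (m := 2) (n := 2))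
        (fromBlocks !![α + p, 1 - p; 1 - p, α + p] 0 !![0, 1 - p; 1 - p, 0] 0) := by
  ext i j
  fin_cases i <;> fin_cases j <;> rfl

theorem charpoly_intensityMatrix (α p : R) :
    (intensityMatrix α p).charpoly = X ^ 2 * (X - C (1 + α)) * (X - C (2 * p + α - 1)) := by
  have hsum : α + p + (1 - p) = 1 + α := by ring
  have hdiff : α + p - (1 - p) = 2 * p + α - 1 := by ring
  rw [intensityMatrix_eq_reindex_fromBlocks, charpoly_reindex, charpoly_fromBlocks_zero_right,
    charpoly_circulant_fin_two, hsum, hdiff, Fintype.card_fin, mul_assoc]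

theorem isDiagonalizable_intensityMatrix (h₂ : IsUnit (2 : R)) {α p : R} (hα : IsUnit (1 + α))
    (hp : IsUnit (2 * p + α - 1)) : IsDiagonalizable (intensityMatrix α p) := by
  have hB : IsUnit !![α + p, 1 - p; 1 - p, α + p] := by
    rw [isUnit_circulant_fin_two_iff]
    constructor
    · convert! hα using 1
      ring
    · convert! hp using 1
      ring
  rw [intensityMatrix_eq_reindex_fromBlocks]
  exact ((IsDiagonalizable.circulant_fin_two h₂ _ _).fromBlocks_zero_right hB _).reindex _

theorem stmt19_general (α p : R) :
    (intensityMatrix α p).charpoly = X ^ 2 * (X - C (1 + α)) * (X - C (2 * p + α - 1)) ∧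
    (IsUnit (2 : R) → IsUnit (1 + α) → IsUnit (2 * p + α - 1) →
      IsDiagonalizable (intensityMatrix α p)) :=
  ⟨charpoly_intensityMatrix α p, fun h₂ hα hp => isDiagonalizable_intensityMatrix h₂ hα hp⟩

/-- the intensity matrix `A^c` of the Pólya urn tracking red/blue weights
and red/blue clusters has characteristic polynomial `λ²(λ-(1+α))(λ-(2p+α-1))`, and is
diagonalizable over `ℝ` whenever `α ≠ -1`, `α ≠ 1-2p`, and `p ≠ 1`. -/
theorem stmt19 (α p : ℝ) :
    (Matrix.charpoly
        (!![α + p, 1 - p, 0, 0;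
            1 - p, α + p, 0, 0;
            0, 1 - p, 0, 0;
            1 - p, 0, 0, 0] : Matrix (Fin 4) (Fin 4) ℝ)
      = Polynomial.X ^ 2 * (Polynomial.X - Polynomial.C (1 + α))
          * (Polynomial.X - Polynomial.C (2 * p + α - 1))) ∧
    (α ≠ -1 → α ≠ 1 - 2 * p → p ≠ 1 →
      ∃ P D : Matrix (Fin 4) (Fin 4) ℝ, IsUnit P ∧ D.IsDiag ∧
        (!![α + p, 1 - p, 0, 0;
            1 - p, α + p, 0, 0;
            0, 1 - p, 0, 0;
            1 - p, 0, 0, 0] : Matrix (Fin 4) (Fin 4) ℝ) = P * D * P⁻¹) := by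
  obtain ⟨hchar, hdiag⟩ := stmt19_general α p
  exact ⟨hchar, fun hα hp _ => hdiag two_ne_zero.isUnit (.mk0 _ (by grind)) (.mk0 _ (by grind))⟩
end
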